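/- The traceless parts of the matrices K^μ satisfy Σ_ν L^ν · L_ν = −3·I, where the sum runs over ν ∈ {0,1,2,3}. -/

import Mathlib

open Matrix BigOperators

noncomputable section

/-- The Pauli basis of `Mat(2,ℂ)`: `σ^0 = I`, `σ^1, σ^2, σ^3` the Pauli matrices. -/
def σm : Fin 4 → Matrix (Fin 2) (Fin 2) ℂ :=
  ![1, !![0, 1; 1, 0], !![0, -Complex.I; Complex.I, 0], !![1, 0; 0, -1]]

/-- The Minkowski matrix `η = diag(1,-1,-1,-1)`. -/
def ηm : Fin 4 → Fin 4 → ℝ := fun a b => if a = b then (if a = 0 then 1 else -1) else 0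

/-- Lowered-index Pauli matrices `σ_a := Σ_b η_{ab} σ^b`. -/
def σd (a : Fin 4) : Matrix (Fin 2) (Fin 2) ℂ := ∑ b, ηm a b • σm b

/-- The conjugate matrix `M̃ := (tr M)·I − M`. -/
def mtilde (M : Matrix (Fin 2) (Fin 2) ℂ) : Matrix (Fin 2) (Fin 2) ℂ :=
  M.trace • (1 : Matrix (Fin 2) (Fin 2) ℂ) - M

/-- The contravariant metric `g^{μν} := Σ_{a,b} y^μ_a y^ν_b η^{ab}` built from a tetrad `y`. -/
def gUp (y : Matrix (Fin 4) (Fin 4) ℝ) : Matrix (Fin 4) (Fin 4) ℝ :=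
  Matrix.of fun μ ν => ∑ a, ∑ b, y μ a * y ν b * ηm a b

/-- The covariant metric `g_{μν}`, the inverse matrix of `(g^{μν})`. -/
def gDown (y : Matrix (Fin 4) (Fin 4) ℝ) : Matrix (Fin 4) (Fin 4) ℝ := (gUp y)⁻¹

/-- `K^μ := Σ_a y^μ_a σ^a ∈ Mat(2,ℂ)`. -/
def K (y : Matrix (Fin 4) (Fin 4) ℝ) (μ : Fin 4) : Matrix (Fin 2) (Fin 2) ℂ :=
  ∑ a, y μ a • σm a

/-- `K_μ := Σ_ν g_{μν} K^ν`. -/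
def Kd (y : Matrix (Fin 4) (Fin 4) ℝ) (μ : Fin 4) : Matrix (Fin 2) (Fin 2) ℂ :=
  ∑ ν, gDown y μ ν • K y ν

/-- `L^μ := K^μ − τ^μ·I`, the traceless part of `K^μ`, where `τ^μ := y^μ_0`. -/
def Lm (y : Matrix (Fin 4) (Fin 4) ℝ) (μ : Fin 4) : Matrix (Fin 2) (Fin 2) ℂ :=
  K y μ - (y μ 0 : ℂ) • (1 : Matrix (Fin 2) (Fin 2) ℂ)

/-- `L_μ := Σ_ν g_{μν} L^ν`. -/
def Ld (y : Matrix (Fin 4) (Fin 4) ℝ) (μ : Fin 4) : Matrix (Fin 2) (Fin 2) ℂ :=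
  ∑ ν, gDown y μ ν • Lm y ν

/-!
The frame component `a = 0` of `K^μ` is exactly its scalar part, so `L^μ` is the combination of the
three Pauli matrices with coefficients the spatial columns of the tetrad. Contracting with
`g_{μν}` turns `Σ_ν L^ν L_ν` into `Σ_{a,b} (yᵀ g y)_{ab} σ^a σ^b` over spatial indices. As
`(g^{μν}) = y η yᵀ`, the congruence `yᵀ g y` is `η⁻¹ = η`, whose spatial block is `-I`, and each
Pauli matrix squares to `I`.
-/

section Contraction

variable {ι κ o R : Type*} [Fintype ι] [Fintype κ]

lemma sum_smul_sum_smul_eq_sum_mul_smul {M : Type*} [Semiring R] [AddCommMonoid M] [Module R M]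
    (P : Matrix o ι R) (Q : Matrix ι κ R) (s : κ → M) (ν : o) :
    ∑ μ, P ν μ • ∑ b, Q μ b • s b = ∑ b, (P * Q) ν b • s b := by
  simp only [Matrix.mul_apply, Finset.smul_sum, Finset.sum_smul, smul_smul]
  exact Finset.sum_comm

lemma sum_sum_smul_mul_sum_smul {A : Type*} [Fintype o] [CommSemiring R] [Semiring A]
    [Algebra R A] (P : Matrix o ι R) (Q : Matrix o κ R) (s : ι → A) (t : κ → A) :
    ∑ ν, (∑ a, P ν a • s a) * (∑ b, Q ν b • t b) = ∑ a, ∑ b, (Pᵀ * Q) a b • (s a * t b) := by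
  simp only [Matrix.mul_apply, Matrix.transpose_apply, Finset.sum_mul_sum, Finset.sum_smul,
    smul_mul_smul_comm]
  rw [Finset.sum_comm]
  exact Finset.sum_congr rfl fun a _ => Finset.sum_comm

end Contraction

lemma transpose_mul_inv_congruence_mul {n R : Type*} [Fintype n] [DecidableEq n] [CommRing R]
    (y η : Matrix n n R) (hy : IsUnit y.det) : yᵀ * ((y * η * yᵀ)⁻¹ * y) = η⁻¹ := by
  have hyT : IsUnit yᵀ.det := by rwa [Matrix.det_transpose]
  rw [Matrix.mul_inv_rev, Matrix.mul_inv_rev, Matrix.mul_assoc,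
    Matrix.nonsing_inv_mul_cancel_right _ _ hy, Matrix.mul_nonsing_inv_cancel_left _ _ hyT]

lemma of_ηm_eq_diagonal : Matrix.of ηm = Matrix.diagonal fun a => if a = 0 then 1 else -1 :=
  rfl

lemma inv_of_ηm : (Matrix.of ηm)⁻¹ = Matrix.of ηm := by
  refine Matrix.inv_eq_left_inv ?_
  rw [of_ηm_eq_diagonal, Matrix.diagonal_mul_diagonal, ← Matrix.diagonal_one]
  congr 1 with a
  split_ifs <;> norm_num

lemma ηm_succ_succ (i j : Fin 3) : ηm i.succ j.succ = if i = j then -1 else 0 := by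
  simp [ηm]

lemma gUp_eq_mul_of_ηm_mul_transpose (y : Matrix (Fin 4) (Fin 4) ℝ) :
    gUp y = y * Matrix.of ηm * yᵀ := by
  ext μ ν
  simp only [gUp, Matrix.mul_apply, Matrix.of_apply, Matrix.transpose_apply, Finset.sum_mul]
  rw [Finset.sum_comm]
  exact Finset.sum_congr rfl fun b _ => Finset.sum_congr rfl fun a _ => mul_right_comm _ _ _

lemma transpose_mul_gDown_mul (y : Matrix (Fin 4) (Fin 4) ℝ) (hy : IsUnit y.det) :
    yᵀ * (gDown y * y) = Matrix.of ηm := by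
  rw [gDown, gUp_eq_mul_of_ηm_mul_transpose, transpose_mul_inv_congruence_mul y _ hy, inv_of_ηm]

lemma σm_mul_self (a : Fin 4) : σm a * σm a = 1 := by
  fin_cases a <;> simp [σm, Matrix.one_fin_two]

lemma Lm_eq_sum_succ (y : Matrix (Fin 4) (Fin 4) ℝ) (μ : Fin 4) :
    Lm y μ = ∑ i : Fin 3, y μ i.succ • σm i.succ := by
  have hσ : σm 0 = 1 := rfl
  rw [Lm, K, Fin.sum_univ_succ, hσ, Complex.coe_smul, add_sub_cancel_left]

lemma Ld_eq_sum_succ (y : Matrix (Fin 4) (Fin 4) ℝ) (μ : Fin 4) :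
    Ld y μ = ∑ i : Fin 3, (gDown y * y) μ i.succ • σm i.succ := by
  simp only [Ld, Lm_eq_sum_succ]
  exact sum_smul_sum_smul_eq_sum_mul_smul (gDown y) (y.submatrix id Fin.succ) _ μ

lemma sum_Lm_mul_Ld (y : Matrix (Fin 4) (Fin 4) ℝ) :
    ∑ ν, Lm y ν * Ld y ν =
      ∑ i : Fin 3, ∑ j : Fin 3,
        (yᵀ * (gDown y * y)) i.succ j.succ • (σm i.succ * σm j.succ) := by
  simp only [Lm_eq_sum_succ, Ld_eq_sum_succ]
  exact sum_sum_smul_mul_sum_smul (y.submatrix id Fin.succ)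
    ((gDown y * y).submatrix id Fin.succ) _ _

/-- `Σ_ν L^ν L_ν = −3 I` for the traceless parts `L^ν` of `K^ν`. -/
theorem L_contraction (y : Matrix (Fin 4) (Fin 4) ℝ) (hy : IsUnit y.det) :
    (∑ ν, Lm y ν * Ld y ν) = (-3 : ℂ) • (1 : Matrix (Fin 2) (Fin 2) ℂ) := by
  calc ∑ ν, Lm y ν * Ld y ν
      = ∑ i : Fin 3, ∑ j : Fin 3, ηm i.succ j.succ • (σm i.succ * σm j.succ) := by
        rw [sum_Lm_mul_Ld, transpose_mul_gDown_mul y hy]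
        rfl
    _ = ∑ i : Fin 3, -(σm i.succ * σm i.succ) := by
        simp only [ηm_succ_succ, ite_smul, zero_smul, neg_one_smul, Finset.sum_ite_eq,
          Finset.mem_univ, if_true]
    _ = ∑ _i : Fin 3, -1 := by simp only [σm_mul_self]
    _ = (-3 : ℂ) • 1 := by simp [neg_smul, ofNat_smul_eq_nsmul]
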